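/- For every n ≥ 1 and every x ∈ [0,1], the modified Durrmeyer operator satisfies D_n^{M,1}(e_1; x) = (a_1(n) + 2a_0(n)) x + (1 - 2x)(3a_0(n) + 2a_1(n))/(n+2), where e_1(t) = t. -/

import Mathlib

open Filter Topology

/-- Bernstein basis polynomial `p_{n,k}(x)`, zero when `k < 0` or `k > n`. -/
noncomputable def bern (n : ℕ) (k : ℤ) (x : ℝ) : ℝ :=
  if 0 ≤ k ∧ k ≤ (n : ℤ) then (n.choose k.toNat : ℝ) * x ^ k.toNat * (1 - x) ^ (n - k.toNat)
  else 0

/-- Modified Bernstein basis `p_{n,k}^{M,1}(x)` of Khosravian-Arab et al. -/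
noncomputable def pM1 (a0 a1 : ℕ → ℝ) (n : ℕ) (k : ℤ) (x : ℝ) : ℝ :=
  (a1 n * x + a0 n) * bern (n - 1) k x + (a1 n * (1 - x) + a0 n) * bern (n - 1) (k - 1) x

/-- First-order modified Durrmeyer operator `D_n^{M,1}(f;x)`. -/
noncomputable def DM1 (a0 a1 : ℕ → ℝ) (n : ℕ) (f : ℝ → ℝ) (x : ℝ) : ℝ :=
  ((n : ℝ) + 1) * ∑ k ∈ Finset.range (n + 1),
    pM1 a0 a1 n k x * ∫ t in (0:ℝ)..1, bern n k t * f t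

/-!
For `k < n` the difference `p_{n,k} - p_{n,k+1}` is a multiple of the derivative of `p_{n+1,k+1}`,
which vanishes at `0` and `1`, so all `p_{n,k}` with `k ≤ n` have the same integral `1 / (n + 1)`
over `[0, 1]`. As `t p_{n,k}(t)` is a multiple of `p_{n+1,k+1}(t)`, this gives
`∫ p_{n,k}(t) t dt = (k + 1) / ((n + 1) (n + 2))`, so the first moment of the operator is the sum of
`(k + 1) p_{n,k}^{M,1}(x)` divided by `n + 2`. Shifting the index in the second half of the modified
basis leaves two sums over the basis of degree `n - 1`, both of the form `∑ (k + c) p_{n-1,k}(x)`,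
which equals `(n - 1) x + c`.
-/

open Polynomial

section BernsteinPolynomial

lemma integral_eval_derivative (p : ℝ[X]) (a b : ℝ) :
    ∫ t in a..b, p.derivative.eval t = p.eval b - p.eval a :=
  intervalIntegral.integral_eq_sub_of_hasDerivAt (fun t _ => p.hasDerivAt t)
    (p.derivative.continuous.intervalIntegrable a b)

lemma integral_eval_bernsteinPolynomial_zero (n : ℕ) :
    ∫ t in (0 : ℝ)..1, (bernsteinPolynomial ℝ n 0).eval t = 1 / ((n : ℝ) + 1) := by
  have h := integral_eval_derivative (bernsteinPolynomial ℝ (n + 1) 0) 0 1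
  simp only [bernsteinPolynomial.derivative_zero, bernsteinPolynomial.eval_at_0,
    bernsteinPolynomial.eval_at_1, eval_mul, eval_neg, eval_natCast, Nat.add_sub_cancel,
    intervalIntegral.integral_const_mul, (Nat.succ_ne_zero n).symm, if_true, if_false] at h
  push_cast at h
  rw [eq_div_iff (by positivity)]
  linarith

lemma integral_eval_bernsteinPolynomial_succ {n ν : ℕ} (hν : ν < n) :
    ∫ t in (0 : ℝ)..1, (bernsteinPolynomial ℝ n (ν + 1)).eval t =
      ∫ t in (0 : ℝ)..1, (bernsteinPolynomial ℝ n ν).eval t := by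
  have h := integral_eval_derivative (bernsteinPolynomial ℝ (n + 1) (ν + 1)) 0 1
  simp only [bernsteinPolynomial.derivative_succ, bernsteinPolynomial.eval_at_0,
    bernsteinPolynomial.eval_at_1, eval_mul, eval_sub, eval_natCast, Nat.add_sub_cancel,
    intervalIntegral.integral_const_mul, Nat.add_right_cancel_iff, hν.ne, Nat.succ_ne_zero,
    if_false, sub_zero] at h
  rw [intervalIntegral.integral_sub ((Polynomial.continuous _).intervalIntegrable _ _)
    ((Polynomial.continuous _).intervalIntegrable _ _)] at h
  have hn : ((n + 1 : ℕ) : ℝ) ≠ 0 := by positivity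
  exact (sub_eq_zero.mp ((mul_eq_zero.mp h).resolve_left hn)).symm

theorem integral_eval_bernsteinPolynomial {n ν : ℕ} (hν : ν ≤ n) :
    ∫ t in (0 : ℝ)..1, (bernsteinPolynomial ℝ n ν).eval t = 1 / ((n : ℝ) + 1) := by
  induction ν with
  | zero => exact integral_eval_bernsteinPolynomial_zero n
  | succ ν ih => rw [integral_eval_bernsteinPolynomial_succ hν, ih (Nat.le_of_succ_le hν)]

lemma succ_mul_X_mul_bernsteinPolynomial (R : Type*) [CommRing R] (n ν : ℕ) :
    ((n : R[X]) + 1) * (X * bernsteinPolynomial R n ν) =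
      ((ν : R[X]) + 1) * bernsteinPolynomial R (n + 1) (ν + 1) := by
  have choose_eq : ((n : R[X]) + 1) * n.choose ν = (n + 1).choose (ν + 1) * ((ν : R[X]) + 1) :=
    mod_cast congrArg (Nat.cast : ℕ → R[X]) (Nat.add_one_mul_choose_eq n ν)
  simp only [bernsteinPolynomial, Nat.add_sub_add_right]
  linear_combination X ^ (ν + 1) * (1 - X) ^ (n - ν) * choose_eq

theorem integral_eval_bernsteinPolynomial_mul_id {n ν : ℕ} (hν : ν ≤ n) :
    ∫ t in (0 : ℝ)..1, (bernsteinPolynomial ℝ n ν).eval t * t =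
      ((ν : ℝ) + 1) / (((n : ℝ) + 1) * ((n : ℝ) + 2)) := by
  have raise_degree (t : ℝ) : (bernsteinPolynomial ℝ n ν).eval t * t =
      ((ν : ℝ) + 1) / ((n : ℝ) + 1) * (bernsteinPolynomial ℝ (n + 1) (ν + 1)).eval t := by
    have h := congrArg (eval t) (succ_mul_X_mul_bernsteinPolynomial ℝ n ν)
    simp only [eval_mul, eval_add, eval_natCast, eval_one, eval_X] at h
    field_simp
    linear_combination h
  simp only [raise_degree, intervalIntegral.integral_const_mul]
  rw [integral_eval_bernsteinPolynomial (Nat.succ_le_succ hν)]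
  push_cast
  field_simp
  ring

end BernsteinPolynomial

section Bern

lemma bern_natCast (n k : ℕ) (x : ℝ) : bern n k x = (bernsteinPolynomial ℝ n k).eval x := by
  rcases le_or_gt k n with hk | hk
  · simp [bern, bernsteinPolynomial, hk]
  · simp [bern, bernsteinPolynomial.eq_zero_of_lt ℝ hk, hk]

lemma bern_of_neg (n : ℕ) {k : ℤ} (hk : k < 0) (x : ℝ) : bern n k x = 0 :=
  if_neg fun h => hk.not_ge h.1

lemma bern_of_lt {n : ℕ} {k : ℤ} (hk : n < k) (x : ℝ) : bern n k x = 0 :=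
  if_neg fun h => hk.not_ge h.2

theorem sum_bern_mul_add_const (n : ℕ) (x c : ℝ) :
    ∑ k ∈ Finset.range (n + 1), bern n k x * (k + c) = n * x + c := by
  have sum_one := congrArg (eval x) (bernsteinPolynomial.sum ℝ n)
  have sum_id := congrArg (eval x) (bernsteinPolynomial.sum_smul ℝ n)
  simp only [eval_finsetSum, eval_one, eval_X, nsmul_eq_mul, eval_mul,
    eval_natCast] at sum_one sum_id
  calc ∑ k ∈ Finset.range (n + 1), bern n k x * (k + c)
      = ∑ k ∈ Finset.range (n + 1), k * (bernsteinPolynomial ℝ n k).eval x +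
          c * ∑ k ∈ Finset.range (n + 1), (bernsteinPolynomial ℝ n k).eval x := by
        rw [Finset.mul_sum, ← Finset.sum_add_distrib]
        exact Finset.sum_congr rfl fun k _ => by rw [bern_natCast]; ring
    _ = n * x + c := by rw [sum_id, sum_one, mul_one]

end Bern

section ModifiedDurrmeyer

variable (a0 a1 : ℕ → ℝ) (n : ℕ) (x : ℝ)

theorem sum_pM1_succ_mul (g : ℕ → ℝ) :
    ∑ k ∈ Finset.range (n + 2), pM1 a0 a1 (n + 1) k x * g k =
      (a1 (n + 1) * x + a0 (n + 1)) * ∑ k ∈ Finset.range (n + 1), bern n k x * g k +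
        (a1 (n + 1) * (1 - x) + a0 (n + 1)) *
          ∑ k ∈ Finset.range (n + 1), bern n k x * g (k + 1) := by
  have drop_last : ∑ k ∈ Finset.range (n + 2), bern n k x * g k =
      ∑ k ∈ Finset.range (n + 1), bern n k x * g k := by
    rw [Finset.sum_range_succ, bern_of_lt (by simp), zero_mul, add_zero]
  have shift : ∑ k ∈ Finset.range (n + 2), bern n (k - 1) x * g k =
      ∑ k ∈ Finset.range (n + 1), bern n k x * g (k + 1) := by
    rw [Finset.sum_range_succ', bern_of_neg n (by simp), zero_mul, add_zero]
    simp only [Nat.cast_add_one, add_sub_cancel_right]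
  simp only [pM1, Nat.add_sub_cancel, add_mul _ _ (g _), mul_assoc, Finset.sum_add_distrib,
    ← Finset.mul_sum, drop_last, shift]

theorem DM1_id_eq_sum :
    DM1 a0 a1 n (fun t => t) x =
      (∑ k ∈ Finset.range (n + 1), pM1 a0 a1 n k x * (k + 1)) / ((n : ℝ) + 2) := by
  rw [DM1, Finset.mul_sum, Finset.sum_div]
  refine Finset.sum_congr rfl fun k hk => ?_
  simp only [bern_natCast]
  rw [integral_eval_bernsteinPolynomial_mul_id (Finset.mem_range_succ_iff.mp hk)]
  field_simp

end ModifiedDurrmeyer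

theorem DM1_moment_e1_general (a0 a1 : ℕ → ℝ) (n : ℕ) (hn : 1 ≤ n) (x : ℝ) :
    DM1 a0 a1 n (fun t => t) x
      = (a1 n + 2 * a0 n) * x + (1 - 2 * x) * (3 * a0 n + 2 * a1 n) / ((n : ℝ) + 2) := by
  obtain ⟨m, rfl⟩ := Nat.exists_eq_add_of_le' hn
  have sum_shifted : ∑ k ∈ Finset.range (m + 1), bern m k x * (((k + 1 : ℕ) : ℝ) + 1) =
      m * x + 2 := by
    simpa only [Nat.cast_add_one, add_assoc, one_add_one_eq_two] using sum_bern_mul_add_const m x 2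
  rw [DM1_id_eq_sum, sum_pM1_succ_mul a0 a1 m x fun k => (k : ℝ) + 1,
    sum_bern_mul_add_const, sum_shifted]
  field_simp
  push_cast
  ring

theorem DM1_moment_e1 (a0 a1 : ℕ → ℝ) (n : ℕ) (hn : 1 ≤ n)
    (x : ℝ) (hx : x ∈ Set.Icc (0:ℝ) 1) :
    DM1 a0 a1 n (fun t => t) x
      = (a1 n + 2 * a0 n) * x + (1 - 2 * x) * (3 * a0 n + 2 * a1 n) / ((n : ℝ) + 2) :=
  DM1_moment_e1_general a0 a1 n hn x
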